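/- arXiv:1011.5971 — 2 statements merged into one kernel-verified Lean document; each statement's English description precedes it below -/
import Mathlib

section
/- Suppose the letter x_n occurs at some earlier position in the directive word, so that \bar{h_{n-1}} is a suffix of u_n. Then the word v_{n-1} := u_n (\bar{h_{n-1}})^{-1} (obtained from u_n by deleting the suffix \bar{h_{n-1}}) is a palindrome, and v_{n-1} is both a prefix and a suffix of u_{n-1}. -/
variable {A : Type*} [DecidableEq A]

/-- `psiW a` is the morphism with `ψ_a(a) = a` and `ψ_a(x) = ax` for `x ≠ a`. -/
def psiW (a : A) (w : List A) : List A :=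
  w.flatMap (fun b => if b = a then [a] else [a, b])

/-- `muW x n = ψ_{x 1} ∘ ⋯ ∘ ψ_{x n}`. -/
def muW (x : ℕ → A) : ℕ → List A → List A
  | 0 => id
  | n + 1 => fun w => muW x n (psiW (x (n + 1)) w)

/-- `hW x n = μ_n (x_{n+1})`. -/
def hW (x : ℕ → A) (n : ℕ) : List A := muW x n [x (n + 1)]

/-- `p` is the palindromic right-closure of `w`: the shortest palindrome having `w`
as a prefix. -/
def IsPalClosure (w p : List A) : Prop :=
  w <+: p ∧ p.reverse = p ∧
    ∀ q : List A, w <+: q → q.reverse = q → p.length ≤ q.length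

/-- The finite word `w` is a prefix of the infinite word `s`. -/
def PrefInf (w : List A) (s : ℕ → A) : Prop :=
  ∀ i : ℕ, ∀ h : i < w.length, w[i] = s i

/-- Number of occurrences (positions) of `w` as a factor of `v`. -/
def occ (w v : List A) : ℕ :=
  (List.range (v.length + 1)).countP
    (fun i => decide (i + w.length ≤ v.length ∧ (v.drop i).take w.length = w))

/-- `cat z k = z 1 ++ z 2 ++ ⋯ ++ z k`. -/
def cat (z : ℕ → List A) (k : ℕ) : List A := ((List.range' 1 k).map z).flatten

/-- `z` is the Ziv-Lempel factorization of the infinite word `s`: each `z m` is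
the shortest prefix of `z m · z (m+1) ⋯` occurring only once in `z 1 ⋯ z m`. -/
def IsZFact (s : ℕ → A) (z : ℕ → List A) : Prop :=
  ∀ m : ℕ, 1 ≤ m → z m ≠ [] ∧ PrefInf (cat z m) s ∧
    occ (z m) (cat z m) = 1 ∧
    ∀ p : List A, p <+: z m → p ≠ z m → 2 ≤ occ p (cat z m)

/-- `c` is the Crochemore factorization of the infinite word `s`: each `c m` is
either a fresh letter, or the longest prefix of `c m · c (m+1) ⋯` occurring
twice in `c 1 ⋯ c m`. -/
def IsCFact (s : ℕ → A) (c : ℕ → List A) : Prop :=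
  ∀ m : ℕ, 1 ≤ m → c m ≠ [] ∧ PrefInf (cat c m) s ∧
    ((∃ a : A, c m = [a] ∧ a ∉ cat c (m - 1)) ∨
      (2 ≤ occ (c m) (cat c m) ∧
        occ (c m ++ [s (cat c m).length]) (cat c m ++ [s (cat c m).length]) = 1))

theorem psiW_append (a : A) (w w' : List A) : psiW a (w ++ w') = psiW a w ++ psiW a w' := by
  simp [psiW]

theorem muW_append (x : ℕ → A) (m : ℕ) : ∀ w w' : List A,
    muW x m (w ++ w') = muW x m w ++ muW x m w' := by
  induction m with
  | zero => intro w w'; rfl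
  | succ m ih => intro w w'; simp only [muW, psiW_append, ih]

theorem muW_succ_ne (x : ℕ → A) (m : ℕ) (a : A) (h : x (m + 1) ≠ a) :
    muW x (m + 1) [a] = hW x m ++ muW x m [a] := by
  have : psiW (x (m + 1)) [a] = [x (m + 1)] ++ [a] := by simp [psiW, h.symm]
  simp only [muW, this, muW_append, hW]

theorem muW_succ_eq (x : ℕ → A) (m : ℕ) (a : A) (h : x (m + 1) = a) :
    muW x (m + 1) [a] = hW x m := by
  have : psiW (x (m + 1)) [a] = [x (m + 1)] := by simp [psiW, h]
  simp only [muW, this, hW]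

section
variable {x : ℕ → A} {u : ℕ → List A}

theorem u_pal (hu1 : u 1 = [])
    (hu : ∀ n : ℕ, 1 ≤ n → IsPalClosure (u n ++ [x n]) (u (n + 1))) (n : ℕ) (hn : 1 ≤ n) :
    (u n).reverse = u n := by
  obtain rfl | h := Nat.eq_or_lt_of_le hn
  · simp [hu1]
  · obtain ⟨k, rfl⟩ : ∃ k, n = k + 1 := ⟨n - 1, by omega⟩
    exact (hu k (by omega)).2.1

theorem u_mono (hu : ∀ n : ℕ, 1 ≤ n → IsPalClosure (u n ++ [x n]) (u (n + 1)))
    (i n : ℕ) (hi : 1 ≤ i) (h : i ≤ n) : u i <+: u n := by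
  induction n, h using Nat.le_induction with
  | base => exact List.prefix_rfl
  | succ n h ih =>
    exact ih.trans ((List.prefix_append _ _).trans (hu n (by omega)).1)

theorem u_mono' (hu : ∀ n : ℕ, 1 ≤ n → IsPalClosure (u n ++ [x n]) (u (n + 1)))
    (i n : ℕ) (hi : 1 ≤ i) (h : i < n) : u i ++ [x i] <+: u n :=
  (hu i hi).1.trans (u_mono hu (i + 1) n (by omega) h)

theorem pal_prefix (hu1 : u 1 = [])
    (hu : ∀ n : ℕ, 1 ≤ n → IsPalClosure (u n ++ [x n]) (u (n + 1))) (n : ℕ) (hn : 1 ≤ n)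
    (q : List A) (hq : q.reverse = q) (hqu : q <+: u n) : ∃ j, 1 ≤ j ∧ j ≤ n ∧ q = u j := by
  induction n, hn using Nat.le_induction with
  | base => exact ⟨1, le_rfl, le_rfl, by simpa [hu1] using hqu⟩
  | succ n h ih =>
    by_cases hl : q.length ≤ (u n).length
    · obtain ⟨j, h1, h2, h3⟩ := ih (List.prefix_of_prefix_length_le hqu
        (u_mono hu n (n + 1) h (by omega)) hl)
      exact ⟨j, h1, by omega, h3⟩
    · have h1 : u n ++ [x n] <+: q :=
        List.prefix_of_prefix_length_le (hu n h).1 hqu (by simp; omega)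
      exact ⟨n + 1, by omega, le_rfl, hqu.eq_of_length_le ((hu n h).2.2 q h1 hq)⟩

/-- A palindromic prefix of `u n` followed by `a`. -/
theorem pal_prefix_letter (hu1 : u 1 = [])
    (hu : ∀ n : ℕ, 1 ≤ n → IsPalClosure (u n ++ [x n]) (u (n + 1))) (n : ℕ) (hn : 1 ≤ n)
    (q : List A) (a : A) (hq : q.reverse = q) (hqu : q ++ [a] <+: u n) :
    ∃ j, 1 ≤ j ∧ j < n ∧ q = u j ∧ x j = a := by
  obtain ⟨j, h1, h2, rfl⟩ := pal_prefix hu1 hu n hn q hq ((List.prefix_append _ _).trans hqu)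
  have hjn : j < n := by
    rcases Nat.lt_or_ge j n with h | h
    · exact h
    · have : j = n := by omega
      subst this
      have := hqu.length_le
      simp at this
  refine ⟨j, h1, hjn, rfl, ?_⟩
  have := List.prefix_of_prefix_length_le hqu (u_mono' hu j n h1 hjn) (by simp)
  have := this.eq_of_length (by simp)
  simpa using this.symm

/-- Structure of a palindrome extending a palindrome by a short word. -/
theorem short_ext (w t : List A) (hw : w.reverse = w) (hR : (w ++ t).reverse = w ++ t)
    (hl : t.length ≤ w.length) : ∃ p, w = t.reverse ++ p ∧ w = p ++ t ∧ p.reverse = p := by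
  rw [List.reverse_append, hw] at hR
  have h1 : t.reverse <+: w := by
    refine List.prefix_of_prefix_length_le (l₃ := w ++ t) ?_ (List.prefix_append _ _) (by simpa)
    rw [← hR]; exact List.prefix_append _ _
  obtain ⟨p, hp⟩ := h1
  have h2 : w = p ++ t := by
    have : t.reverse ++ w = t.reverse ++ (p ++ t) := by rw [hR, ← List.append_assoc, hp]
    exact List.append_cancel_left this
  refine ⟨p, hp.symm, h2, ?_⟩
  have h3 : w = t.reverse ++ p.reverse := by rw [← List.reverse_append, ← h2, hw]
  exact List.append_cancel_left (h3.symm.trans hp.symm)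

def InvW (x : ℕ → A) (u : ℕ → List A) (m : ℕ) : Prop :=
  ∀ a, ((∀ j, 1 ≤ j → j ≤ m → x j ≠ a) → muW x m [a] = u (m + 1) ++ [a]) ∧
    ∀ i, 1 ≤ i → i ≤ m → x i = a → (∀ j, i < j → j ≤ m → x j ≠ a) →
      u (m + 1) = muW x m [a] ++ u i

theorem last_occ (x : ℕ → A) (m : ℕ) (a : A) (h : ∃ i, 1 ≤ i ∧ i ≤ m ∧ x i = a) :
    ∃ i, 1 ≤ i ∧ i ≤ m ∧ x i = a ∧ ∀ j, i < j → j ≤ m → x j ≠ a := by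
  induction m with
  | zero => obtain ⟨i, h1, h2, _⟩ := h; omega
  | succ m ih =>
    by_cases hm : x (m + 1) = a
    · exact ⟨m + 1, by omega, le_rfl, hm, fun j h1 h2 => by omega⟩
    · obtain ⟨i, h1, h2, h3⟩ := h
      have : i ≠ m + 1 := by rintro rfl; exact hm h3
      obtain ⟨i, h1, h2, h3, h4⟩ := ih ⟨i, h1, by omega, h3⟩
      refine ⟨i, h1, by omega, h3, fun j hj hj' => ?_⟩
      rcases Nat.lt_or_ge m j with h | h
      · have : j = m + 1 := by omega
        subst this; exact hm
      · exact h4 j hj h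

theorem justin (hu1 : u 1 = [])
    (hu : ∀ n : ℕ, 1 ≤ n → IsPalClosure (u n ++ [x n]) (u (n + 1))) (m : ℕ)
    (hI : InvW x u m) : u (m + 2) = hW x m ++ u (m + 1) := by
  have hw := u_pal hu1 hu (m + 1) (by omega)
  obtain ⟨⟨s, hs⟩, hRp, hmin⟩ := hu (m + 1) (by omega)
  change _ = u (m + 2) at hs
  change (u (m + 2)).reverse = u (m + 2) at hRp
  change ∀ q, _ → _ → (u (m + 2)).length ≤ _ at hmin
  obtain ⟨ha, hb⟩ := hI (x (m + 1))
  change _ → hW x m = _ at ha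
  change ∀ i, _ → _ → _ → _ → _ = hW x m ++ _ at hb
  set a := x (m + 1) with hadef
  -- short extensions come from palindromic prefixes
  have key : (a :: s).length ≤ (u (m + 1)).length →
      ∃ j, 1 ≤ j ∧ j < m + 1 ∧ x j = a ∧ u (m + 1) = (a :: s).reverse ++ u j := by
    intro hl
    obtain ⟨p, hp1, hp2, hp3⟩ := short_ext (u (m + 1)) (a :: s) hw
      (by have : u (m + 1) ++ a :: s = u (m + 2) := by rw [← hs]; simp
          rw [this, hRp]) hl
    obtain ⟨j, h1, h2, h3, h4⟩ := pal_prefix_letter hu1 hu (m + 1) (by omega) p a hp3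
      ⟨s, by rw [hp2]; simp⟩
    exact ⟨j, h1, h2, h4, by rw [← h3]; exact hp1⟩
  have hR2 : u (m + 2) = (a :: s).reverse ++ u (m + 1) := by
    rw [← hRp, ← hs]; simp [hw]
  by_cases h : ∃ i, 1 ≤ i ∧ i ≤ m ∧ x i = a
  · obtain ⟨i, h1, h2, h3, h4⟩ := last_occ x m a h
    have hE := hb i h1 h2 h3 h4
    have hip := u_pal hu1 hu i h1
    have hE' : u (m + 1) = u i ++ (hW x m).reverse := by
      rw [← hw]; conv_lhs => rw [hE]
      rw [List.reverse_append, hip]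
    have hlen : (u (m + 2)).length ≤ (hW x m ++ u (m + 1)).length := by
      apply hmin
      · have hpre := u_mono' hu i (m + 1) h1 (by omega)
        rw [h3] at hpre
        obtain ⟨r, hr⟩ := hpre
        refine ⟨r, ?_⟩
        conv_rhs => rw [← hr]
        conv_lhs => rw [hE]
        simp
      · rw [List.reverse_append, hw]
        conv_lhs => rw [hE]
        conv_rhs => rw [hE']
        simp
    have hl1 : (a :: s).length ≤ (hW x m).length := by
      rw [hR2] at hlen
      simp only [List.length_append, List.length_reverse] at hlen
      omega
    have hl2 : (u (m + 1)).length = (hW x m).length + (u i).length := by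
      rw [hE]; simp
    obtain ⟨j, j1, j2, j3, j4⟩ := key (by omega)
    have hji : j ≤ i := by
      by_contra hc
      exact h4 j (by omega) (by omega) j3
    have hl3 := (u_mono hu j i j1 hji).length_le
    have hl4 : (u (m + 1)).length = (a :: s).length + (u j).length := by
      rw [j4]; simp; omega
    have : (a :: s).reverse = hW x m :=
      (List.append_inj (j4.symm.trans hE) (by rw [List.length_reverse]; omega)).1
    rw [hR2, this]
  · have hne : ∀ j, 1 ≤ j → j ≤ m → x j ≠ a := fun j h1 h2 h3 => h ⟨j, h1, h2, h3⟩
    have hE := ha hne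
    have hlen : (u (m + 2)).length ≤ (u (m + 1) ++ [a] ++ u (m + 1)).length := by
      apply hmin
      · exact List.prefix_append _ _
      · simp [hw]
    have hlt : ¬ (a :: s).length ≤ (u (m + 1)).length := by
      intro hc
      obtain ⟨j, j1, j2, j3, _⟩ := key hc
      exact hne j j1 (by omega) j3
    have hls : s.length = (u (m + 1)).length := by
      rw [← hs] at hlen
      simp at hlen hlt
      omega
    have hsu : s.reverse = u (m + 1) := by
      have : s.reverse ++ ([a] ++ u (m + 1)) = u (m + 1) ++ ([a] ++ s) := by
        have := hR2.symm.trans hs.symm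
        simpa using this
      exact (List.append_inj this (by simpa)).1
    rw [hE, hR2]
    simp [hsu]

theorem inv_all (hu1 : u 1 = [])
    (hu : ∀ n : ℕ, 1 ≤ n → IsPalClosure (u n ++ [x n]) (u (n + 1))) (m : ℕ) : InvW x u m := by
  induction m with
  | zero =>
    intro a
    exact ⟨fun _ => by simp [muW, hu1], fun i h1 h2 => by omega⟩
  | succ m ih =>
    have hJ := justin hu1 hu m ih
    intro a
    refine ⟨fun h => ?_, fun i h1 h2 h3 h4 => ?_⟩
    · rw [muW_succ_ne x m a (h _ (by omega) le_rfl),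
        (ih a).1 fun j hj hj' => h j hj (by omega)]
      change _ = u (m + 2) ++ _
      rw [hJ]; simp
    · change u (m + 2) = _
      by_cases hx : x (m + 1) = a
      · have : i = m + 1 := by
          by_contra hc
          exact h4 (m + 1) (by omega) le_rfl hx
        subst this
        rw [muW_succ_eq x m a hx, hJ]
      · have hi : i ≠ m + 1 := by rintro rfl; exact hx h3
        rw [muW_succ_ne x m a hx, hJ,
          (ih a).2 i h1 (by omega) h3 fun j hj hj' => h4 j hj (by omega)]
        simp

end

theorem v_palindrome (x : ℕ → A) (u : ℕ → List A) (hu1 : u 1 = [])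
    (hu : ∀ n : ℕ, 1 ≤ n → IsPalClosure (u n ++ [x n]) (u (n + 1))) (n : ℕ) (hn : 1 ≤ n)
    (hocc : ∃ i : ℕ, 1 ≤ i ∧ i < n ∧ x i = x n) :
    ∃ v : List A, u n = v ++ (hW x (n - 1)).reverse ∧ v.reverse = v ∧
      v <+: u (n - 1) ∧ v <:+ u (n - 1) := by
  obtain ⟨m, rfl⟩ : ∃ m, n = m + 1 := ⟨n - 1, by omega⟩
  obtain ⟨i0, g1, g2, g3⟩ := hocc
  obtain ⟨i, h1, h2, h3, h4⟩ := last_occ x m (x (m + 1)) ⟨i0, g1, by omega, g3⟩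
  have hE : u (m + 1) = hW x m ++ u i := (inv_all hu1 hu m (x (m + 1))).2 i h1 h2 h3 h4
  have hip := u_pal hu1 hu i h1
  have hpre := u_mono hu i m h1 h2
  simp only [Nat.add_sub_cancel]
  refine ⟨u i, ?_, hip, hpre, ?_⟩
  · rw [← u_pal hu1 hu (m + 1) (by omega)]
    conv_lhs => rw [hE]
    rw [List.reverse_append, hip]
  · rw [← hip, ← u_pal hu1 hu m (by omega)]
    exact List.reverse_suffix.mpr hpre
end

section
/- Let s be a standard episturmian word over alphabet A whose directive word uses every letter of A, with run-length decomposition y_1^{d_1}y_2^{d_2}⋯. Let k_0 = |A| and m = 1 if d_1 = 1, m = 0 otherwise. Then for all sufficiently large k, the Ziv-Lempel and Crochemore factors are related by z_k = y_{k-1}^{-1} c_{k+k_0-1-m} y_k. -/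
variable {A : Type*} [DecidableEq A]

section Helpers

set_option linter.unusedSectionVars false

/-- The combinatorial data extracted from the palindromic prefixes. -/
structure PalData {A : Type*} (s : ℕ → A) (L : ℕ → ℕ) (x : ℕ → A) : Prop where
  one : L 1 = 0
  mono : ∀ n, 1 ≤ n → L n < L (n + 1)
  letter : ∀ n, 1 ≤ n → s (L n) = x n
  pal : ∀ n, 1 ≤ n → ∀ i, i < L n → s i = s (L n - 1 - i)
  close : ∀ n, 1 ≤ n → ∀ q, q ≤ L n →
    (∀ i, q ≤ i → i ≤ L n → s i = s (L n + q - i)) → L (n + 1) ≤ L n + 1 + q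

/-- The factor `s[N..M)` occurs at an earlier position. -/
def Early {A : Type*} (s : ℕ → A) (N M : ℕ) : Prop :=
  ∃ i, i < N ∧ ∀ t, N + t < M → s (i + t) = s (N + t)

theorem palData_of {A : Type*} (x : ℕ → A) (u : ℕ → List A) (hu1 : u 1 = [])
    (hu : ∀ n : ℕ, 1 ≤ n → IsPalClosure (u n ++ [x n]) (u (n + 1))) (s : ℕ → A)
    (hs : ∀ n : ℕ, 1 ≤ n → PrefInf (u n) s) : PalData s (fun n => (u n).length) x where
  one := by simp [hu1]
  mono := by
    intro n hn
    have := (hu n hn).1.length_le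
    simp at this
    show (u n).length < (u (n+1)).length
    omega
  letter := by
    intro n hn
    obtain ⟨r, hr⟩ := (hu n hn).1
    have h := hs (n+1) (by omega) (u n).length (by rw [← hr]; simp)
    rw [← h]
    simp [← hr]
  pal := by
    intro n hn i hi
    have hp : (u n).reverse = u n := by
      rcases Nat.lt_or_ge n 2 with h | h
      · have : n = 1 := by omega
        subst this; simp [hu1]
      · have := (hu (n-1) (by omega)).2.1
        rwa [Nat.sub_add_cancel hn] at this
    have hi' : i < (u n).length := hi
    rw [← hs n hn i hi', ← hs n hn ((u n).length - 1 - i) (by omega)]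
    rw [← List.getElem_reverse (l := u n) (by simpa using hi')]
    simp only [hp]
  close := by
    intro n hn q hq hpal
    set l := (u n).length with hl
    let f : ℕ → A := fun i => if i ≤ l then s i else s (l + q - i)
    have hlet : s l = x n := by
      obtain ⟨r, hr⟩ := (hu n hn).1
      have h := hs (n+1) (by omega) (u n).length (by rw [← hr]; simp)
      rw [hl, ← h]
      simp [← hr]
    have := (hu n hn).2.2 ((List.range (l + 1 + q)).map f) ?_ ?_
    · simpa using this
    · refine List.prefix_iff_eq_take.2 ?_
      apply List.ext_getElem
      · simp; omega
      · intro i h1 h2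
        simp at h1
        simp only [List.getElem_take, List.getElem_map, List.getElem_range, f]
        rw [if_pos (by omega)]
        by_cases h : i < l
        · rw [List.getElem_append_left (by omega)]
          exact hs n hn i _
        · have : i = l := by omega
          subst this
          simp [hl, hlet]
          rw [← hl, hlet]
    · apply List.ext_getElem
      · simp
      · intro i h1 h2
        simp at h1
        simp only [List.getElem_reverse, List.getElem_map, List.getElem_range, f,
          List.length_map, List.length_range]
        have e : l + 1 + q - 1 - i = l + q - i := by omega
        rw [e]
        by_cases hi : i ≤ l
        · rw [if_pos hi]
          by_cases hi2 : q ≤ i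
          · rw [if_pos (by omega)]
            exact (hpal i hi2 hi).symm
          · rw [if_neg (by omega)]
            congr 1; omega
        · rw [if_neg hi, if_pos (by omega)]

namespace PalData
variable {B : Type*} {s : ℕ → B} {L : ℕ → ℕ} {x : ℕ → B}

theorem le_of (h : PalData s L x) {m n : ℕ} (hm : 1 ≤ m) (hmn : m ≤ n) : L m ≤ L n := by
  induction n, hmn using Nat.le_induction with
  | base => exact le_rfl
  | succ n hn ih => have := h.mono n (by omega); omega

theorem lt_of (h : PalData s L x) {m n : ℕ} (hm : 1 ≤ m) (hmn : m < n) : L m < L n := by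
  have := h.le_of (m := m + 1) (n := n) (by omega) hmn
  have := h.mono m hm
  omega

theorem period (h : PalData s L x) {n : ℕ} (hn : 1 ≤ n) (i : ℕ) (hi : i < L n) :
    s (i + (L (n+1) - L n)) = s i := by
  have hm := h.mono n hn
  rw [h.pal (n+1) (by omega) (i + (L (n+1) - L n)) (by omega), h.pal n hn i hi]
  congr 1; omega

theorem len_le (h : PalData s L x) {n : ℕ} (hn : 1 ≤ n) : L (n+1) ≤ 2 * L n + 1 := by
  have := h.close n hn (L n) le_rfl (by
    intro i h1 h2
    congr 1; omega)
  omega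

theorem len_le_rep (h : PalData s L x) {j n : ℕ} (hj : 1 ≤ j) (hjn : j < n) (hx : x j = x n) :
    L (n+1) + L j ≤ 2 * L n := by
  have hlt := h.lt_of hj hjn
  have hq : s (L n - L j - 1) = x n := by
    rw [h.pal n (by omega) _ (by omega), ← hx, ← h.letter j hj]
    congr 1; omega
  have := h.close n (by omega) (L n - L j - 1) (by omega) (by
    intro i h1 h2
    by_cases e1 : i = L n
    · subst e1
      rw [h.letter n (by omega), Nat.add_sub_cancel_left, hq]
    by_cases e2 : i = L n - L j - 1
    · rw [e2, hq, Nat.add_sub_cancel, h.letter n (by omega)]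
    rw [h.pal n (by omega) i (by omega), h.pal n (by omega) (L n + (L n - L j - 1) - i) (by omega),
      h.pal j hj (L n - 1 - i) (by omega)]
    congr 1; omega)
  omega

/-- Within a block the increments do not grow. -/
theorem incr_le (h : PalData s L x) {n m : ℕ} (hn : 1 ≤ n) (hnm : n ≤ m)
    (hx : ∀ i, n ≤ i → i ≤ m → x i = x n) : L (m+1) + L n ≤ L m + L (n+1) := by
  induction m, hnm using Nat.le_induction with
  | base => omega
  | succ m hm ih =>
    have h1 := ih (fun i hi hi' => hx i hi (by omega))
    have h2 := h.len_le_rep (j := m) (n := m+1) (by omega) (by omega)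
      (by rw [hx m hm (by omega), hx (m+1) (by omega) le_rfl])
    omega

theorem fresh (h : PalData s L x) {n : ℕ} (hn : 1 ≤ n) (a : B)
    (ha : ∀ i, 1 ≤ i → i < n → x i ≠ a) : ∀ i, i < L n → s i ≠ a := by
  induction n, hn using Nat.le_induction with
  | base => intro i hi; rw [h.one] at hi; omega
  | succ n hn ih =>
    have ih := ih (fun i h1 h2 => ha i h1 (by omega))
    intro i hi
    have hl := h.len_le hn
    by_cases h1 : i < L n
    · exact ih i h1
    by_cases h2 : i = L n
    · subst h2; rw [h.letter n hn]; exact ha n hn (by omega)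
    rw [h.pal (n+1) (by omega) i hi]
    exact ih _ (by omega)

/-- Main non-recurrence. -/
theorem not_early (h : PalData s L x) {n : ℕ} (hn : 1 ≤ n) (hx : x n ≠ x (n+1)) {N : ℕ}
    (hN : N ≤ L n + 1) : ¬ Early s N (L (n+1) + 1) := by
  classical
  rintro ⟨i, hi, he⟩
  have hm := h.mono n hn
  obtain ⟨p, hp⟩ : ∃ p, L (n+1) = L n + p := ⟨L (n+1) - L n, by omega⟩
  have hper : ∀ i, i < L n → s (i + p) = s i := by
    intro i hi
    have := h.period hn i hi
    rwa [hp, Nat.add_sub_cancel_left] at this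
  let χ : ℕ → ℕ := fun i => if s i = x (n+1) then 1 else 0
  let F : ℕ → ℕ := fun v => ∑ t ∈ Finset.range p, χ (v + t)
  have step : ∀ v, F (v+1) + χ v = F v + χ (v + p) := by
    intro v
    have h1 := Finset.sum_range_succ (fun t => χ (v + t)) p
    have h2 := Finset.sum_range_succ' (fun t => χ (v + t)) p
    have h3 : F (v+1) = ∑ t ∈ Finset.range p, χ (v + (t+1)) := by
      apply Finset.sum_congr rfl; intro t _; congr 1; omega
    simp only [Nat.add_zero] at h2
    rw [h3, ← h2, h1]
  have const : ∀ v, v ≤ L n → F v = F 0 := by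
    intro v hv
    induction v with
    | zero => rfl
    | succ v ih =>
      have h1 := step v
      have h2 : χ (v + p) = χ v := by simp only [χ, hper v (by omega)]
      have := ih (by omega)
      omega
  have hlast := step (L n)
  have e1 : χ (L n) = 0 := by simp only [χ]; rw [h.letter n hn, if_neg hx]
  have e2 : χ (L n + p) = 1 := by
    simp only [χ]; rw [← hp, h.letter (n+1) (by omega), if_pos rfl]
  have e3 : F (L n + 1) = F (i + (L n + 1 - N)) := by
    apply Finset.sum_congr rfl
    intro t ht
    rw [Finset.mem_range] at ht
    have := he (L n + 1 - N + t) (by omega)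
    simp only [χ]
    rw [show L n + 1 + t = N + (L n + 1 - N + t) by omega, ← this, Nat.add_assoc]
  have := const (L n) le_rfl
  have := const (i + (L n + 1 - N)) (by omega)
  omega

/-- No overshoot. -/
theorem not_const (h : PalData s L x) {n : ℕ} (hn : 1 ≤ n) (hx : x n ≠ x (n+1)) :
    ¬ ∀ j, L n + 1 ≤ j → j ≤ L (n+1) + 1 → s j = x (n+1) := by
  intro hc
  have hm := h.mono n hn
  have hm' := h.mono (n+1) (by omega)
  have hcl := h.close (n+1) (by omega) (L n + 1) (by omega) (by
    intro i h1 h2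
    rw [hc i h1 (by omega), hc _ (by omega) (by omega)])
  by_cases h1 : L (n+1+1) = L (n+1) + 1
  · have hs : ∀ i, i ≤ L (n+1) → s i = s 0 := by
      intro i hi
      induction i with
      | zero => rfl
      | succ i ih =>
        have := h.period (n := n+1) (by omega) i (by omega)
        rw [h1, Nat.add_sub_cancel_left] at this
        rw [this, ih (by omega)]
    apply hx
    rw [← h.letter n hn, ← h.letter (n+1) (by omega), hs _ le_rfl, hs _ hm.le]
  · refine h.not_early hn hx le_rfl ⟨L (n+1+1) - 2 - L (n+1), by omega, ?_⟩
    intro t ht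
    rw [hc (L n + 1 + t) (by omega) (by omega), h.pal (n+1+1) (by omega) _ (by omega)]
    exact hc _ (by omega) (by omega)

/-- Recurrence from the period. -/
theorem early (h : PalData s L x) {n : ℕ} (hn : 1 ≤ n) {N M : ℕ} (hN : L (n+1) ≤ N + L n)
    (hM : M ≤ L (n+1)) : Early s N M := by
  have hm := h.mono n hn
  refine ⟨N - (L (n+1) - L n), by omega, ?_⟩
  intro t ht
  have := h.period hn (N - (L (n+1) - L n) + t) (by omega)
  rw [← this]
  congr 1; omega

end PalData

variable {B : Type*} [DecidableEq B]

theorem occ_eq_card (w v : List B) : occ w v =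
    ((Finset.range (v.length + 1)).filter
      (fun i => i + w.length ≤ v.length ∧ (v.drop i).take w.length = w)).card := by
  rw [occ, List.countP_eq_length_filter]
  rfl

theorem pos_iff {s : ℕ → B} {w v : List B} (hv : PrefInf v s) {N : ℕ}
    (hw : ∀ t (h : t < w.length), w[t] = s (N + t)) (i : ℕ) :
    (i + w.length ≤ v.length ∧ (v.drop i).take w.length = w) ↔
    (i + w.length ≤ v.length ∧ ∀ t, t < w.length → s (i + t) = s (N + t)) := by
  refine and_congr_right fun hi => ?_
  constructor
  · intro h t ht
    rw [← hw t ht, ← hv (i + t) (by omega)]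
    have : ((v.drop i).take w.length)[t]'(by rw [h]; exact ht) = w[t] := by simp only [h]
    simpa using this
  · intro h
    apply List.ext_getElem
    · simp; omega
    · intro t h1 h2
      rw [hw t h2, ← h t h2, ← hv (i + t) (by omega)]
      simp

theorem two_le_occ {s : ℕ → B} {w v : List B} (hv : PrefInf v s) {N : ℕ}
    (hw : ∀ t (h : t < w.length), w[t] = s (N + t)) (hN : N + w.length ≤ v.length) :
    2 ≤ occ w v ↔ ∃ i, i ≠ N ∧ i + w.length ≤ v.length ∧
      ∀ t, t < w.length → s (i + t) = s (N + t) := by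
  rw [occ_eq_card]
  have hNm : N ∈ (Finset.range (v.length + 1)).filter
      (fun i => i + w.length ≤ v.length ∧ (v.drop i).take w.length = w) := by
    rw [Finset.mem_filter, pos_iff hv hw, Finset.mem_range]
    exact ⟨by omega, hN, fun _ _ => rfl⟩
  constructor
  · intro h
    obtain ⟨i, hi, hne⟩ := Finset.exists_mem_ne (Nat.lt_of_succ_le h) N
    rw [Finset.mem_filter, pos_iff hv hw] at hi
    exact ⟨i, hne, hi.2⟩
  · rintro ⟨i, hne, h⟩
    refine Finset.one_lt_card.2 ⟨i, ?_, N, hNm, hne⟩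
    rw [Finset.mem_filter, pos_iff hv hw, Finset.mem_range]
    exact ⟨by omega, h⟩

theorem one_le_occ {s : ℕ → B} {w v : List B} (hv : PrefInf v s) {N : ℕ}
    (hw : ∀ t (h : t < w.length), w[t] = s (N + t)) (hN : N + w.length ≤ v.length) :
    1 ≤ occ w v := by
  rw [occ_eq_card]
  refine Finset.card_pos.2 ⟨N, ?_⟩
  rw [Finset.mem_filter, pos_iff hv hw, Finset.mem_range]
  exact ⟨by omega, hN, fun _ _ => rfl⟩

theorem cat_succ (z : ℕ → List B) (k : ℕ) : cat z (k+1) = cat z k ++ z (k+1) := by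
  unfold cat
  rw [List.range'_concat]
  simp [Nat.add_comm]

theorem suffix_get {s : ℕ → B} {P w : List B} (h : PrefInf (P ++ w) s) :
    ∀ t (ht : t < w.length), w[t] = s (P.length + t) := by
  intro t ht
  rw [← h (P.length + t) (by simp; omega)]
  simp

/-- If the last factor of `P ++ w` occurs twice then it occurs earlier. -/
theorem two_le_iff_early {s : ℕ → B} {P w : List B} (h : PrefInf (P ++ w) s) :
    2 ≤ occ w (P ++ w) ↔ Early s P.length (P.length + w.length) := by
  rw [two_le_occ h (suffix_get h) (by simp)]
  constructor
  · rintro ⟨i, h1, h2, h3⟩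
    simp at h2
    exact ⟨i, by omega, fun t ht => h3 t (by omega)⟩
  · rintro ⟨i, h1, h3⟩
    exact ⟨i, by omega, by simp; omega, fun t ht => h3 t (by omega)⟩

theorem eq_one_iff_early {s : ℕ → B} {P w : List B} (h : PrefInf (P ++ w) s) :
    occ w (P ++ w) = 1 ↔ ¬ Early s P.length (P.length + w.length) := by
  rw [← two_le_iff_early h]
  have := one_le_occ h (suffix_get h) (by simp)
  omega

theorem Early.mono {s : ℕ → B} {N N' M M' : ℕ} (h : Early s N M) (hN : N ≤ N') (hM : M' ≤ M) :
    Early s N' M' := by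
  obtain ⟨i, hi, he⟩ := h
  refine ⟨i + (N' - N), by omega, fun t ht => ?_⟩
  have := he (N' - N + t) (by omega)
  rw [Nat.add_assoc, this]; congr 1; omega

/-- One step of the z-factorization. -/
theorem z_step {s : ℕ → B} {z : ℕ → List B} (hz : IsZFact s z) {k : ℕ} {M : ℕ}
    (h1 : ∀ M', (cat z k).length < M' → M' < M → Early s (cat z k).length M') (h2 : ¬ Early s (cat z k).length M) :
    (cat z (k+1)).length = M ∨
    (M < (cat z (k+1)).length ∧
      ∀ j, (cat z k).length ≤ j → j < (cat z (k+1)).length → s j = s (cat z k).length) := by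
  obtain ⟨hne, hpre, hocc, hprop⟩ := hz (k+1) (by omega)
  rw [cat_succ] at hpre hocc hprop ⊢
  have hlen : 0 < (z (k+1)).length := List.length_pos_iff.2 hne
  rw [eq_one_iff_early hpre] at hocc
  rw [List.length_append]
  set N := (cat z k).length with hN
  rcases Nat.lt_trichotomy (N + (z (k+1)).length) M with h | h | h
  · exact absurd (h1 _ (by omega) h) hocc
  · exact Or.inl h
  · refine Or.inr ⟨h, ?_⟩
    have hd := hprop (z (k+1)).dropLast (List.dropLast_prefix _) (by
      intro e
      have := congrArg List.length e
      simp at this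
      omega)
    have hw : ∀ t (ht : t < (z (k+1)).dropLast.length), (z (k+1)).dropLast[t] = s (N + t) := by
      intro t ht
      rw [List.getElem_dropLast]
      exact suffix_get hpre t _
    rw [two_le_occ hpre hw (by simp; omega)] at hd
    obtain ⟨i, hi, hi2, he⟩ := hd
    simp only [List.length_append, List.length_dropLast] at hi2 he
    have : i = N + 1 := by
      by_contra hne'
      apply h2
      exact ⟨i, by omega, fun t ht => he t (by omega)⟩
    subst this
    intro j hj
    induction j, hj using Nat.le_induction with
    | base => intro _; rfl
    | succ j hj ih =>
      intro hj2
      rw [← ih (by omega)]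
      have := he (j - N) (by omega)
      rw [show N + 1 + (j - N) = j + 1 by omega, show N + (j - N) = j by omega] at this
      exact this

theorem prefInf_snoc {s : ℕ → B} {v : List B} (h : PrefInf v s) : PrefInf (v ++ [s v.length]) s := by
  intro i hi
  by_cases h' : i < v.length
  · rw [List.getElem_append_left h']; exact h i h'
  · simp at hi
    have : i = v.length := by omega
    subst this
    simp

/-- One step of the c-factorization, fresh letter. -/
theorem c_step_fresh {s : ℕ → B} {c : ℕ → List B} (hc : IsCFact s c) {k : ℕ}
    (h : ∀ i, i < (cat c k).length → s i ≠ s (cat c k).length) :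
    (cat c (k+1)).length = (cat c k).length + 1 := by
  obtain ⟨hne, hpre, hor⟩ := hc (k+1) (by omega)
  rw [cat_succ] at hpre hor ⊢
  have hlen : 0 < (c (k+1)).length := List.length_pos_iff.2 hne
  rcases hor with ⟨a, ha, -⟩ | ⟨h2, -⟩
  · simp [ha]
  · rw [two_le_iff_early hpre] at h2
    obtain ⟨i, hi, he⟩ := h2
    exact absurd (he 0 (by omega)) (h i hi)

/-- One step of the c-factorization, non-fresh. -/
theorem c_step {s : ℕ → B} {c : ℕ → List B} (hc : IsCFact s c) {k M : ℕ}
    (hM : (cat c k).length < M)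
    (h1 : Early s (cat c k).length M) (h2 : ¬ Early s (cat c k).length (M + 1)) :
    (cat c (k+1)).length = M := by
  obtain ⟨hne, hpre, hor⟩ := hc (k+1) (by omega)
  rw [cat_succ] at hpre hor ⊢
  have hlen : 0 < (c (k+1)).length := List.length_pos_iff.2 hne
  rcases hor with ⟨a, ha, hna⟩ | ⟨h3, h4⟩
  · exfalso
    obtain ⟨i, hi, he⟩ := h1
    apply hna
    have hsa : s (cat c k).length = a := by
      have := suffix_get hpre 0 hlen
      simp only [ha, List.getElem_cons_zero, Nat.add_zero] at this
      exact this.symm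
    have h0 := he 0 (by omega)
    simp only [Nat.add_zero] at h0
    have := hpre i (by simp; omega)
    rw [List.getElem_append_left hi, h0, hsa] at this
    rw [← this, Nat.add_sub_cancel]
    exact List.getElem_mem _
  · rw [two_le_iff_early hpre] at h3
    have hp2 := prefInf_snoc hpre
    rw [List.append_assoc] at hp2 h4
    rw [eq_one_iff_early hp2] at h4
    simp only [List.length_append, List.length_singleton] at h4 ⊢
    by_contra hne'
    rcases Nat.lt_or_ge M ((cat c k).length + (c (k+1)).length) with h | h
    · exact h2 (h3.mono le_rfl (by omega))
    · exact h4 (h1.mono le_rfl (by omega))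

end Helpers

section Blocks

variable {B : Type*} [DecidableEq B] {s : ℕ → B} {L : ℕ → ℕ} {x : ℕ → B} {y : ℕ → B} {g : ℕ → ℕ}

/-- Block data for the run-length decomposition. -/
structure BlockData (x y : ℕ → B) (g : ℕ → ℕ) : Prop where
  one : g 1 = 1
  lt : ∀ k, 1 ≤ k → g k < g (k + 1)
  val : ∀ k, 1 ≤ k → ∀ n, g k ≤ n → n < g (k + 1) → x n = y k
  ne : ∀ k, 1 ≤ k → y k ≠ y (k + 1)

namespace BlockData

theorem pos (b : BlockData x y g) {k : ℕ} (hk : 1 ≤ k) : 1 ≤ g k := by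
  induction k, hk using Nat.le_induction with
  | base => rw [b.one]
  | succ k hk ih => have := b.lt k hk; omega

theorem mono (b : BlockData x y g) {i k : ℕ} (hi : 1 ≤ i) (hk : i ≤ k) : g i ≤ g k := by
  induction k, hk using Nat.le_induction with
  | base => exact le_rfl
  | succ k hk ih => have := b.lt k (by omega); omega

theorem first (b : BlockData x y g) {k : ℕ} (hk : 1 ≤ k) : x (g k) = y k :=
  b.val k hk _ le_rfl (b.lt k hk)

theorem cover (b : BlockData x y g) {k : ℕ} (hk : 1 ≤ k) (i : ℕ) (hi : 1 ≤ i) (hik : i < g k) :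
    ∃ m, 1 ≤ m ∧ m < k ∧ x i = y m := by
  induction k, hk using Nat.le_induction with
  | base => rw [b.one] at hik; omega
  | succ k hk ih =>
    by_cases h : i < g k
    · obtain ⟨m, h1, h2, h3⟩ := ih h
      exact ⟨m, h1, by omega, h3⟩
    · exact ⟨k, hk, by omega, b.val k hk i (by omega) hik⟩

/-- The last index of a block. -/
theorem last (b : BlockData x y g) (h : PalData s L x) {k : ℕ} (hk : 1 ≤ k) :
    ∃ e, g (k + 1) = e + 1 ∧ g k ≤ e ∧ 1 ≤ e ∧ x e ≠ x (e + 1) ∧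
      L (e + 1) + L (g k) ≤ L e + L (g k + 1) ∧ L (g k) ≤ L e := by
  have h1 := b.lt k hk
  have h2 := b.pos hk
  refine ⟨g (k+1) - 1, by omega, by omega, by omega, ?_, ?_, ?_⟩
  · rw [b.val k hk _ (by omega) (by omega), Nat.sub_add_cancel (by omega),
      b.first (k := k+1) (by omega)]
    exact b.ne k hk
  · apply h.incr_le h2 (by omega)
    intro i hi hi'
    rw [b.val k hk i hi (by omega), b.first hk]
  · exact h.le_of h2 (by omega)

end BlockData

theorem z_inv (b : BlockData x y g) (h : PalData s L x) {z : ℕ → List B} (hz : IsZFact s z)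
    {k : ℕ} (hk : 1 ≤ k) : L (g k) + 1 ≤ (cat z k).length ∧
      (cat z k).length ≤ L (g (k+1) - 1) + 1 ∧ (2 ≤ k → (cat z k).length = L (g k) + 1) := by
  induction k, hk using Nat.le_induction with
  | base =>
    obtain ⟨e, h1, h2, h3, h4, h5, h6⟩ := b.last h (k := 1) le_rfl
    have hc0 : (cat z 0).length = 0 := by simp [cat]
    have hl := h.len_le (n := 1) le_rfl
    have hst := z_step hz (k := 0) (M := 1) (by rw [hc0]; intros; omega) (by
      rw [hc0]; rintro ⟨i, hi, -⟩; omega)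
    simp only [b.one, h.one, h1, Nat.add_sub_cancel, hc0, Nat.zero_add] at *
    rcases hst with hst | ⟨hst, hcon⟩
    · omega
    · refine ⟨by omega, ?_, by omega⟩
      by_contra hlt
      apply h4
      have e1 : L (e+1) ≤ L e + 1 := by omega
      have e2 := h.mono e h3
      rw [← h.letter e h3, ← h.letter (e+1) (by omega), hcon (L e) (by omega) (by omega),
        hcon (L (e+1)) (by omega) (by omega)]
  | succ k hk ih =>
    obtain ⟨e, h1, h2, h3, h4, h5, h6⟩ := b.last h hk
    obtain ⟨e', h1', h2', -, -, -, h6'⟩ := b.last h (k := k+1) (by omega)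
    obtain ⟨i1, i2, -⟩ := ih
    have hl := h.len_le (b.pos hk)
    simp only [h1, h1', Nat.add_sub_cancel] at *
    have hne := h.not_early h3 h4 i2
    have hst := z_step hz (k := k) (M := L (e+1) + 1) (by
      intro M' _ hM'
      exact h.early h3 (by omega) (by omega)) hne
    rcases hst with hst | ⟨hst, hcon⟩
    · omega
    · exfalso
      apply h.not_const h3 h4
      have hm := h.mono e h3
      intro j hj1 hj2
      rw [hcon j (by omega) (by omega), ← h.letter (e+1) (by omega),
        hcon (L (e+1)) (by omega) (by omega)]

theorem c_inv_rep (b : BlockData x y g) (h : PalData s L x) {c : ℕ → List B} (hc : IsCFact s c)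
    {k j : ℕ} (hk : 1 ≤ k) (hj : (cat c j).length = L (g k))
    (hrep : ∃ i, 1 ≤ i ∧ i < k ∧ y i = y k) : (cat c (j+1)).length = L (g (k+1)) := by
  obtain ⟨i, hi1, hi2, hi3⟩ := hrep
  obtain ⟨e, h1, h2, h3, h4, h5, h6⟩ := b.last h hk
  have hlt := b.lt i hi1
  have hle := b.mono (i := i + 1) (k := k) (by omega) hi2
  have hr := h.len_le_rep (j := g i) (n := g k) (b.pos hi1) (by omega)
    (by rw [b.first hi1, b.first hk, hi3])
  have hm := h.mono e h3
  rw [h1]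
  apply c_step hc
  · omega
  · exact h.early h3 (by omega) le_rfl
  · exact h.not_early h3 h4 (by omega)

theorem c_inv (b : BlockData x y g) (h : PalData s L x) {c : ℕ → List B} (hc : IsCFact s c)
    {k : ℕ} (hk : 1 ≤ k) : ∃ j, j + (if g 2 = 2 then 1 else 0) =
      k + ((Finset.Icc 1 k).image y).card ∧ (cat c j).length = L (g (k+1)) := by
  induction k, hk using Nat.le_induction with
  | base =>
    obtain ⟨e, h1, h2, h3, h4, h5, h6⟩ := b.last h (k := 1) le_rfl
    have hc0 : (cat c 0).length = 0 := by simp [cat]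
    have hl := h.len_le (n := 1) le_rfl
    have hm1 := h.mono 1 le_rfl
    have hst := c_step_fresh hc (k := 0) (by rw [hc0]; intros; omega)
    have hcard : ((Finset.Icc 1 1).image y).card = 1 := by simp
    rw [hcard]
    simp only [b.one, h.one, hc0, Nat.zero_add, Nat.reduceAdd] at *
    by_cases hg : g 2 = 2
    · exact ⟨1, by simp [hg], by rw [hg]; omega⟩
    · refine ⟨2, by simp [hg], ?_⟩
      have hm := h.mono e h3
      have hm' := h.lt_of (m := 1) (n := e) le_rfl (by omega)
      rw [h1]
      apply c_step hc
      · omega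
      · exact h.early h3 (by omega) le_rfl
      · exact h.not_early h3 h4 (by omega)
  | succ k hk ih =>
    obtain ⟨j, hj, hlen⟩ := ih
    have hI : Finset.Icc 1 (k+1) = insert (k+1) (Finset.Icc 1 k) := by
      ext i; simp; omega
    rw [hI, Finset.image_insert]
    by_cases hmem : y (k+1) ∈ (Finset.Icc 1 k).image y
    · rw [Finset.card_insert_of_mem hmem]
      refine ⟨j+1, by omega, ?_⟩
      apply c_inv_rep b h hc (by omega) hlen
      rw [Finset.mem_image] at hmem
      obtain ⟨i, hi, hi'⟩ := hmem
      rw [Finset.mem_Icc] at hi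
      exact ⟨i, hi.1, by omega, hi'⟩
    · rw [Finset.card_insert_of_notMem hmem]
      refine ⟨j+2, by omega, ?_⟩
      obtain ⟨e, h1, h2, h3, h4, h5, h6⟩ := b.last h (k := k+1) (by omega)
      have hp := b.pos (k := k+1) (by omega)
      have hfr := h.fresh hp (y (k+1)) (by
        intro i hi1 hi2 he
        obtain ⟨m, hm1, hm2, hm3⟩ := b.cover (by omega) i hi1 hi2
        apply hmem
        rw [Finset.mem_image]
        exact ⟨m, by rw [Finset.mem_Icc]; omega, by rw [← hm3, he]⟩)
      have hsn : s (L (g (k+1))) = y (k+1) := by rw [h.letter _ hp, b.first (by omega)]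
      have hst := c_step_fresh hc (k := j) (by rw [hlen, hsn]; exact hfr)
      have hl := h.len_le hp
      have hm := h.mono e h3
      have hgt : L (g (k+1)) + 1 < L (e+1) := by
        by_contra hcon
        have hL : L (g (k+1)) = L e := by omega
        have hge : 0 < L e := by
          have := h.lt_of (m := 1) (n := g (k+1)) le_rfl (by
            have := b.lt k hk
            have := b.pos hk
            omega)
          omega
        have hper := h.period h3 (L e - 1) (by omega)
        have : L e - 1 + (L (e+1) - L e) = L (g (k+1)) := by omega
        rw [this, hsn] at hper
        exact hfr _ (by omega) hper.symm
      rw [h1]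
      apply c_step hc
      · omega
      · exact h.early h3 (by omega) le_rfl
      · exact h.not_early h3 h4 (by omega)

end Blocks

theorem z_c_relation [Fintype A] (x : ℕ → A) (u : ℕ → List A) (hu1 : u 1 = [])
    (hu : ∀ n : ℕ, 1 ≤ n → IsPalClosure (u n ++ [x n]) (u (n + 1))) (y : ℕ → A) (d : ℕ → ℕ) (g : ℕ → ℕ)
    (hy : ∀ m : ℕ, 1 ≤ m → y m ≠ y (m + 1)) (hd : ∀ m : ℕ, 1 ≤ m → 0 < d m)
    (hg : ∀ m : ℕ, g m = (∑ i ∈ Finset.Icc 1 (m - 1), d i) + 1)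
    (hx : ∀ m : ℕ, 1 ≤ m → ∀ n : ℕ, g m ≤ n → n < g (m + 1) → x n = y m) (s : ℕ → A) (hs : ∀ n : ℕ, 1 ≤ n → PrefInf (u n) s)
    (hall : ∀ a : A, ∃ i : ℕ, 1 ≤ i ∧ y i = a)
    (z c : ℕ → List A) (hz : IsZFact s z) (hc : IsCFact s c) :
    ∃ K : ℕ, ∀ k : ℕ, K ≤ k →
      y (k - 1) :: z k =
        c (k + Fintype.card A - 1 - (if d 1 = 1 then 1 else 0)) ++ [y k] := by
  have h := palData_of x u hu1 hu s hs
  set L : ℕ → ℕ := fun n => (u n).length with hL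
  have b : BlockData x y g := by
    refine ⟨by simp [hg], ?_, hx, hy⟩
    intro k hk
    rw [hg k, hg (k+1)]
    obtain ⟨k, rfl⟩ : ∃ k', k = k' + 1 := ⟨k - 1, by omega⟩
    simp only [Nat.add_sub_cancel]
    rw [Finset.sum_Icc_succ_top (by omega)]
    have := hd (k+1) (by omega)
    omega
  have hg2 : g 2 = 2 ↔ d 1 = 1 := by rw [hg 2]; simp
  choose f hf1 hf2 using hall
  refine ⟨(∑ a, f a) + 4, fun k hk => ?_⟩
  obtain ⟨k, rfl⟩ : ∃ k', k = k' + 2 := ⟨k - 2, by omega⟩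
  have himg : (Finset.Icc 1 k).image y = Finset.univ := by
    rw [Finset.eq_univ_iff_forall]
    intro a
    rw [Finset.mem_image]
    have : f a ≤ ∑ a, f a := Finset.single_le_sum (fun _ _ => Nat.zero_le _) (Finset.mem_univ a)
    exact ⟨f a, by rw [Finset.mem_Icc]; exact ⟨hf1 a, by omega⟩, hf2 a⟩
  obtain ⟨j, hj, hlen⟩ := c_inv b h hc (k := k) (by omega)
  rw [himg, Finset.card_univ] at hj
  have hlen' := c_inv_rep b h hc (k := k+1) (by omega) hlen (by
    have : y (k+1) ∈ (Finset.Icc 1 k).image y := by rw [himg]; exact Finset.mem_univ _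
    rw [Finset.mem_image] at this
    obtain ⟨i, hi, hi'⟩ := this
    rw [Finset.mem_Icc] at hi
    exact ⟨i, hi.1, by omega, hi'⟩)
  have hz1 := (z_inv b h hz (k := k+1) (by omega)).2.2 (by omega)
  have hz2 := (z_inv b h hz (k := k+2) (by omega)).2.2 (by omega)
  have hidx : k + 2 + Fintype.card A - 1 - (if d 1 = 1 then 1 else 0) = j + 1 := by
    simp only [hg2] at hj
    omega
  rw [hidx]
  have hzp := (hz (k+2) (by omega)).2.1
  have hcp := (hc (j+1) (by omega)).2.1
  rw [cat_succ] at hzp hcp hz2 hlen'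
  have hzg := suffix_get hzp
  have hcg := suffix_get hcp
  rw [List.length_append] at hz2 hlen'
  have hs1 : s (L (g (k+1))) = y (k+1) := by rw [h.letter _ (b.pos (by omega)), b.first (by omega)]
  have hs2 : s (L (g (k+2))) = y (k+2) := by rw [h.letter _ (b.pos (by omega)), b.first (by omega)]
  have hs1' : y (k + 2 - 1) = s (L (g (k+1))) := hs1.symm
  rw [hs1', ← hs2]
  have hz2' : (cat z (k+1)).length + (z (k+2)).length = L (g (k+2)) + 1 := hz2
  have hlen2 : (cat c j).length + (c (j+1)).length = L (g (k+2)) := hlen'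
  have hzg' : ∀ (t : ℕ) (ht : t < (z (k+2)).length),
    (z (k+2))[t] = s ((cat z (k+1)).length + t) := hzg
  apply List.ext_getElem
  · simp; omega
  · intro t h1 h2
    simp only [List.length_cons] at h1
    have hl : (y (k+2-1) :: z (k+2)).length = (z (k+2)).length + 1 := rfl
    have e1 : (s (L (g (k+1))) :: z (k+2))[t] = s (L (g (k+1)) + t) := by
      cases t with
      | zero => rfl
      | succ t =>
        rw [List.getElem_cons_succ, hzg' t (by omega), hz1]
        congr 1; omega
    rw [e1]
    by_cases ht : t < (c (j+1)).length
    · rw [List.getElem_append_left ht, hcg t ht, hlen]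
    · rw [List.getElem_append_right (by omega)]
      simp only [List.getElem_singleton]
      congr 1; omega
end
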